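/- (Proposition 3: zero volumetric charges remain optimal under uncertainty.) The expected optimal value function EV is convex on the rate set 𝒯, and EV(τb, τs) ≤ EV(0, 0) for every (τb, τs) ∈ 𝒯; that is, max_{(τb,τs)∈𝒯} EV(τb, τs) = EV(0, 0), regardless of the probability distribution of the random data. -/

import Mathlib

/-- A lower-level decision vector `x = (d, l, zs, zb, g, (g_{ih}), y)`. -/
structure LVec (N : ℕ) (H : Fin N → Type) where
  d : Fin N → ℝ
  l : Fin N → ℝ
  zs : Fin N → ℝ
  zb : Fin N → ℝ
  g : Fin N → ℝ
  gih : (i : Fin N) → H i → ℝ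
  y : Fin N → ℝ

/-- The lower-level feasible set `X`. -/
def FeasX {N K : ℕ} {H : Fin N → Type} [∀ i, Fintype (H i)]
    (R Gp : Fin N → ℝ) (Gcap : (i : Fin N) → H i → ℝ)
    (T : Fin K → ℝ) (PTDF : Fin K → Fin N → ℝ) (x : LVec N H) : Prop :=
  (∀ i, 0 ≤ x.d i) ∧ (∀ i, 0 ≤ x.l i) ∧ (∀ i, 0 ≤ x.zs i) ∧ (∀ i, 0 ≤ x.zb i) ∧
  (∀ i, 0 ≤ x.g i) ∧ (∀ i (h : H i), 0 ≤ x.gih i h) ∧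
  (∀ i, x.l i + x.zs i - x.zb i - x.g i - R i = 0) ∧
  (∀ i, x.g i ≤ Gp i) ∧
  (∀ i (h : H i), x.gih i h ≤ Gcap i h) ∧
  (∑ i, x.y i = 0) ∧
  (∀ k, -T k ≤ ∑ i, PTDF k i * x.y i ∧ ∑ i, PTDF k i * x.y i ≤ T k) ∧
  (∀ i, x.y i - (∑ h, x.gih i h) - (x.zs i - x.zb i) + x.d i = 0)

/-- The social surplus `Π(x; τb, τs)`. -/
noncomputable def surplus {N : ℕ} {H : Fin N → Type} [∀ i, Fintype (H i)]
    (P0 Q0 α : Fin N → ℝ) (Cg : Fin N → ℝ → ℝ) (a A : (i : Fin N) → H i → ℝ)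
    (τb τs : ℝ) (x : LVec N H) : ℝ :=
  (∑ i, ((∫ m in (0:ℝ)..x.d i, (P0 i - (P0 i / ((1 - α i) * Q0 i)) * m)) - τb * x.d i))
  + (∑ i, (τs * x.zs i - τb * x.zb i
      + (∫ m in (0:ℝ)..x.l i, (P0 i - (P0 i / (α i * Q0 i)) * m)) - Cg i (x.g i)))
  - ∑ i, ∑ h, (a i h * x.gih i h + (1 / 2) * A i h * (x.gih i h) ^ 2)

/-- The optimal value function `V(τb, τs)` (as a real-valued supremum). -/
noncomputable def Vval {N K : ℕ} {H : Fin N → Type} [∀ i, Fintype (H i)]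
    (P0 Q0 α : Fin N → ℝ) (Cg : Fin N → ℝ → ℝ) (a A Gcap : (i : Fin N) → H i → ℝ)
    (R Gp : Fin N → ℝ) (T : Fin K → ℝ) (PTDF : Fin K → Fin N → ℝ)
    (τ : ℝ × ℝ) : ℝ :=
  sSup ((fun x => surplus P0 Q0 α Cg a A τ.1 τ.2 x) ''
    {x : LVec N H | FeasX R Gp Gcap T PTDF x})

/-- The rate set `𝒯`. -/
def Tset (τhat τlow : ℝ) : Set (ℝ × ℝ) :=
  {τ | 0 ≤ τ.1 ∧ τ.1 ≤ τhat ∧ τlow ≤ τ.2 ∧ τ.2 ≤ τ.1}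

open MeasureTheory

/-! For a fixed scenario and a fixed decision, the surplus is affine in the two rates, so `V` is a
supremum of affine functions, and it is convex wherever that supremum is finite. Summing the nodal
balances eliminates the network (`∑ y = 0`) and shows that sales to the grid plus plant output equal
purchases from the grid plus inflexible demand. Hence, for `0 ≤ τb` and `τs ≤ τb`, the charges
contribute `τs ∑ zs - τb (∑ zb + ∑ d) ≤ τb (∑ zs - ∑ zb - ∑ d) = -τb ∑ g_{ih} ≤ 0`, so no decision
gains from them. Both properties survive integration over the scenarios. -/

theorem convexOn_sSup_image {𝕜 E β ι : Type*} [Semiring 𝕜] [PartialOrder 𝕜]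
    [AddCommMonoid E] [SMul 𝕜 E] [AddCommMonoid β] [ConditionallyCompleteLattice β]
    [IsOrderedAddMonoid β] [Module 𝕜 β] [PosSMulMono 𝕜 β]
    {s : Set E} {t : Set ι} {f : E → ι → β} (ht : t.Nonempty)
    (hf : ∀ i ∈ t, ConvexOn 𝕜 s (f · i)) (hbdd : ∀ x ∈ s, BddAbove (f x '' t)) :
    ConvexOn 𝕜 s fun x => sSup (f x '' t) := by
  refine ⟨(hf _ ht.some_mem).1, fun x hx y hy p q hp hq hpq => csSup_le (ht.image _) ?_⟩
  rintro _ ⟨i, hi, rfl⟩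
  calc f (p • x + q • y) i ≤ p • f x i + q • f y i := (hf i hi).2 hx hy hp hq hpq
    _ ≤ p • sSup (f x '' t) + q • sSup (f y '' t) := by
      gcongr
      · exact le_csSup (hbdd x hx) (Set.mem_image_of_mem _ hi)
      · exact le_csSup (hbdd y hy) (Set.mem_image_of_mem _ hi)

theorem integral_sub_mul (p c q : ℝ) : ∫ m in (0 : ℝ)..q, (p - c * m) = p * q - c * q ^ 2 / 2 := by
  rw [intervalIntegral.integral_sub (by simp) (Continuous.intervalIntegrable (by fun_prop) _ _),
    intervalIntegral.integral_const_mul, intervalIntegral.integral_const, integral_id, smul_eq_mul]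
  ring

/- The bound is the area of the triangle below the demand curve, attained at `q = p / c`. -/
theorem integral_sub_mul_le (p q : ℝ) {c : ℝ} (hc : 0 < c) :
    ∫ m in (0 : ℝ)..q, (p - c * m) ≤ p ^ 2 / (2 * c) := by
  rw [integral_sub_mul, le_div_iff₀ (by positivity)]
  nlinarith [sq_nonneg (p - c * q)]

/-- The cone of rates `(τb, τs)` with `0 ≤ τb` and `τs ≤ τb`: the rate set `𝒯` freed of the bounds
`τb ≤ τ̂` and `τlow ≤ τs`. It is where the charges cannot raise the surplus. -/
def rateCone : Set (ℝ × ℝ) := {τ | 0 ≤ τ.1 ∧ τ.2 ≤ τ.1}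

theorem convex_rateCone : Convex ℝ rateCone := by
  rintro τ ⟨hτ, hτ'⟩ σ ⟨hσ, hσ'⟩ p q hp hq -
  exact ⟨add_nonneg (mul_nonneg hp hτ) (mul_nonneg hq hσ),
    add_le_add (mul_le_mul_of_nonneg_left hτ' hp) (mul_le_mul_of_nonneg_left hσ' hq)⟩

theorem Tset_eq_rateCone_inter (τhat τlow : ℝ) :
    Tset τhat τlow = rateCone ∩ Set.Iic τhat ×ˢ Set.Ici τlow := by
  ext τ
  simp only [Tset, rateCone, Set.mem_ofPred_eq, Set.mem_inter_iff, Set.mem_prod, Set.mem_Iic,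
    Set.mem_Ici]
  tauto

theorem convex_Tset (τhat τlow : ℝ) : Convex ℝ (Tset τhat τlow) := by
  rw [Tset_eq_rateCone_inter]
  exact convex_rateCone.inter ((convex_Iic τhat).prod (convex_Ici τlow))

theorem Tset_subset_rateCone (τhat τlow : ℝ) : Tset τhat τlow ⊆ rateCone :=
  Tset_eq_rateCone_inter τhat τlow ▸ Set.inter_subset_left

section Scenario

variable {N K : ℕ} {H : Fin N → Type} [∀ i, Fintype (H i)]
  {P0 Q0 α : Fin N → ℝ} {Cg : Fin N → ℝ → ℝ} {a A Gcap : (i : Fin N) → H i → ℝ}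
  {R Gp : Fin N → ℝ} {T : Fin K → ℝ} {PTDF : Fin K → Fin N → ℝ} {x : LVec N H} {τ : ℝ × ℝ}

/- Witness: at each node flexible demand absorbs the renewable output, and nothing is traded. -/
theorem nonempty_feasX (PTDF : Fin K → Fin N → ℝ) (hR : ∀ i, 0 ≤ R i) (hGp : ∀ i, 0 ≤ Gp i)
    (hGcap : ∀ i h, 0 ≤ Gcap i h) (hT : ∀ k, 0 ≤ T k) :
    {x : LVec N H | FeasX R Gp Gcap T PTDF x}.Nonempty :=
  ⟨⟨0, R, 0, 0, 0, 0, 0⟩, by simp [FeasX, hR, hGp, hGcap, hT]⟩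

theorem surplus_eq_surplus_zero_add (τb τs : ℝ) (x : LVec N H) :
    surplus P0 Q0 α Cg a A τb τs x = surplus P0 Q0 α Cg a A 0 0 x +
      (τs * ∑ i, x.zs i - τb * (∑ i, x.zb i + ∑ i, x.d i)) := by
  simp only [surplus, Finset.sum_sub_distrib, Finset.sum_add_distrib, ← Finset.mul_sum]
  ring

theorem convexOn_surplus (x : LVec N H) :
    ConvexOn ℝ Set.univ fun τ : ℝ × ℝ => surplus P0 Q0 α Cg a A τ.1 τ.2 x := by
  let charge : ℝ × ℝ →ₗ[ℝ] ℝ := (∑ i, x.zs i) • LinearMap.snd ℝ ℝ ℝ -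
    (∑ i, x.zb i + ∑ i, x.d i) • LinearMap.fst ℝ ℝ ℝ
  have surplus_eq (τ : ℝ × ℝ) : surplus P0 Q0 α Cg a A τ.1 τ.2 x =
      surplus P0 Q0 α Cg a A 0 0 x + charge τ := by
    rw [surplus_eq_surplus_zero_add]
    simp [charge, mul_comm]
  simp_rw [surplus_eq]
  exact (convexOn_const _ convex_univ).add (charge.convexOn convex_univ)

theorem sum_zs_add_sum_gih_eq (hx : FeasX R Gp Gcap T PTDF x) :
    ∑ i, x.zs i + ∑ i, ∑ h, x.gih i h = ∑ i, x.zb i + ∑ i, x.d i := by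
  obtain ⟨-, -, -, -, -, -, -, -, -, sum_y, -, node_balance⟩ := hx
  have total := Finset.sum_eq_zero fun i (_ : i ∈ Finset.univ) => node_balance i
  simp only [Finset.sum_sub_distrib, Finset.sum_add_distrib, sum_y] at total
  linarith

theorem surplus_le_surplus_zero (hτ : τ ∈ rateCone) (hx : FeasX R Gp Gcap T PTDF x) :
    surplus P0 Q0 α Cg a A τ.1 τ.2 x ≤ surplus P0 Q0 α Cg a A 0 0 x := by
  have balance := sum_zs_add_sum_gih_eq hx
  obtain ⟨-, -, zs_nonneg, -, -, gih_nonneg, -⟩ := hx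
  have charge_nonpos : τ.2 * ∑ i, x.zs i - τ.1 * (∑ i, x.zb i + ∑ i, x.d i) ≤ 0 := calc
    _ ≤ τ.1 * ∑ i, x.zs i - τ.1 * (∑ i, x.zb i + ∑ i, x.d i) := by
      gcongr
      · exact Finset.sum_nonneg fun i _ => zs_nonneg i
      · exact hτ.2
    _ = -(τ.1 * ∑ i, ∑ h, x.gih i h) := by rw [← balance]; ring
    _ ≤ 0 := neg_nonpos.2 <| mul_nonneg hτ.1 <|
      Finset.sum_nonneg fun i _ => Finset.sum_nonneg fun h _ => gih_nonneg i h
  rw [surplus_eq_surplus_zero_add]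
  linarith

theorem bddAbove_surplus_zero (hP0 : ∀ i, 0 < P0 i) (hQ0 : ∀ i, 0 < Q0 i)
    (hα0 : ∀ i, 0 < α i) (hα1 : ∀ i, α i < 1) (hCg : ∀ i, BddBelow (Cg i '' Set.Icc 0 (Gp i))) :
    BddAbove (surplus P0 Q0 α Cg a A 0 0 '' {x | FeasX R Gp Gcap T PTDF x}) := by
  have plant_cost_bdd i h : BddBelow
      ((fun g => a i h * g + 1 / 2 * A i h * g ^ 2) '' Set.Icc 0 (Gcap i h)) :=
    isCompact_Icc.bddBelow_image (by fun_prop)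
  choose backupMin hbackup using hCg
  choose plantMin hplant using plant_cost_bdd
  refine ⟨∑ i, P0 i ^ 2 / (2 * (P0 i / ((1 - α i) * Q0 i))) +
    ∑ i, (P0 i ^ 2 / (2 * (P0 i / (α i * Q0 i))) - backupMin i) - ∑ i, ∑ h, plantMin i h, ?_⟩
  rintro _ ⟨x, ⟨-, -, -, -, g_nonneg, gih_nonneg, -, g_le, gih_le, -⟩, rfl⟩
  simp only [surplus, zero_mul, sub_zero, zero_add]
  gcongr with i _ i _ i _ h _
  · exact integral_sub_mul_le _ _ (div_pos (hP0 i) (mul_pos (sub_pos.2 (hα1 i)) (hQ0 i)))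
  · exact integral_sub_mul_le _ _ (div_pos (hP0 i) (mul_pos (hα0 i) (hQ0 i)))
  · exact hbackup i ⟨x.g i, ⟨g_nonneg i, g_le i⟩, rfl⟩
  · exact hplant i h ⟨x.gih i h, ⟨gih_nonneg i h, gih_le i h⟩, rfl⟩

theorem bddAbove_surplus
    (hbdd : BddAbove (surplus P0 Q0 α Cg a A 0 0 '' {x | FeasX R Gp Gcap T PTDF x}))
    (hτ : τ ∈ rateCone) :
    BddAbove (surplus P0 Q0 α Cg a A τ.1 τ.2 '' {x | FeasX R Gp Gcap T PTDF x}) := by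
  obtain ⟨B, hB⟩ := hbdd
  refine ⟨B, ?_⟩
  rintro _ ⟨x, hx, rfl⟩
  exact (surplus_le_surplus_zero hτ hx).trans (hB ⟨x, hx, rfl⟩)

theorem convexOn_Vval
    (hbdd : BddAbove (surplus P0 Q0 α Cg a A 0 0 '' {x | FeasX R Gp Gcap T PTDF x}))
    (hfeas : {x : LVec N H | FeasX R Gp Gcap T PTDF x}.Nonempty) :
    ConvexOn ℝ rateCone (Vval P0 Q0 α Cg a A Gcap R Gp T PTDF) :=
  convexOn_sSup_image hfeas
    (fun x _ => (convexOn_surplus x).subset (Set.subset_univ _) convex_rateCone)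
    (fun _ hτ => bddAbove_surplus hbdd hτ)

theorem Vval_le_Vval_zero
    (hbdd : BddAbove (surplus P0 Q0 α Cg a A 0 0 '' {x | FeasX R Gp Gcap T PTDF x}))
    (hfeas : {x : LVec N H | FeasX R Gp Gcap T PTDF x}.Nonempty) (hτ : τ ∈ rateCone) :
    Vval P0 Q0 α Cg a A Gcap R Gp T PTDF τ ≤ Vval P0 Q0 α Cg a A Gcap R Gp T PTDF (0, 0) := by
  refine csSup_le (hfeas.image _) ?_
  rintro _ ⟨x, hx, rfl⟩
  exact (surplus_le_surplus_zero hτ hx).trans (le_csSup hbdd ⟨x, hx, rfl⟩)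

end Scenario

theorem zero_volumetric_charge_optimal_stochastic_general
    {N K : ℕ} {H : Fin N → Type} [∀ i, Fintype (H i)]
    {P0 Q0 α : Fin N → ℝ} {Cg : Fin N → ℝ → ℝ} {PTDF : Fin K → Fin N → ℝ}
    (hP0 : ∀ i, 0 < P0 i) (hQ0 : ∀ i, 0 < Q0 i)
    (hα0 : ∀ i, 0 < α i) (hα1 : ∀ i, α i < 1)
    (hCg : ∀ i c, BddBelow (Cg i '' Set.Icc 0 c))
    {Ω : Type*} [MeasurableSpace Ω] {P : Measure Ω}
    {R Gp : Ω → Fin N → ℝ} {Gcap a A : Ω → (i : Fin N) → H i → ℝ} {T : Ω → Fin K → ℝ}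
    (hfeas : ∀ᵐ ω ∂P, {x : LVec N H | FeasX (R ω) (Gp ω) (Gcap ω) (T ω) PTDF x}.Nonempty)
    {S : Set (ℝ × ℝ)} (hS : Convex ℝ S) (hScone : S ⊆ rateCone) (h0 : (0, 0) ∈ S)
    (hInt : ∀ τ ∈ S, Integrable (fun ω =>
      Vval P0 Q0 α Cg (a ω) (A ω) (Gcap ω) (R ω) (Gp ω) (T ω) PTDF τ) P) :
    ConvexOn ℝ S
      (fun τ => ∫ ω, Vval P0 Q0 α Cg (a ω) (A ω) (Gcap ω) (R ω) (Gp ω) (T ω) PTDF τ ∂P) ∧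
    ∀ τ ∈ S,
      (∫ ω, Vval P0 Q0 α Cg (a ω) (A ω) (Gcap ω) (R ω) (Gp ω) (T ω) PTDF τ ∂P) ≤
      ∫ ω, Vval P0 Q0 α Cg (a ω) (A ω) (Gcap ω) (R ω) (Gp ω) (T ω) PTDF (0, 0) ∂P := by
  have hbdd ω := bddAbove_surplus_zero (a := a ω) (A := A ω) (Gcap := Gcap ω) (R := R ω)
    (Gp := Gp ω) (T := T ω) (PTDF := PTDF) hP0 hQ0 hα0 hα1 fun i => hCg i _
  constructor
  · refine integral_convexOn_of_integrand_ae hS ?_ hInt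
    filter_upwards [hfeas] with ω hω
    exact (convexOn_Vval (hbdd ω) hω).subset hScone hS
  · intro τ hτ
    refine integral_mono_ae (hInt τ hτ) (hInt _ h0) ?_
    filter_upwards [hfeas] with ω hω
    exact Vval_le_Vval_zero (hbdd ω) hω (hScone hτ)

/-- (Proposition 3: zero volumetric charges remain optimal under uncertainty.) The expected
optimal value function `EV` is convex on `𝒯` and is maximized over `𝒯` at `(0, 0)`,
regardless of the probability distribution of the random data. -/
theorem zero_volumetric_charge_optimal_stochastic
    (N K : ℕ) (hN : 1 ≤ N)
    (H : Fin N → Type) [∀ i, Fintype (H i)]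
    (P0 Q0 α : Fin N → ℝ) (Cg : Fin N → ℝ → ℝ) (PTDF : Fin K → Fin N → ℝ)
    (hP0 : ∀ i, 0 < P0 i) (hQ0 : ∀ i, 0 < Q0 i)
    (hα0 : ∀ i, 0 < α i) (hα1 : ∀ i, α i < 1)
    (hCg : ∀ i, ContDiff ℝ 1 (Cg i)) (hCgconv : ∀ i, StrictConvexOn ℝ Set.univ (Cg i))
    (Ω : Type) [MeasurableSpace Ω] (P : Measure Ω) [IsProbabilityMeasure P]
    (R Gp : Ω → Fin N → ℝ) (Gcap a A : Ω → (i : Fin N) → H i → ℝ)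
    (T : Ω → Fin K → ℝ)
    (hRmeas : ∀ i, Measurable fun ω => R ω i)
    (hGpmeas : ∀ i, Measurable fun ω => Gp ω i)
    (hGcapmeas : ∀ i (h : H i), Measurable fun ω => Gcap ω i h)
    (hameas : ∀ i (h : H i), Measurable fun ω => a ω i h)
    (hAmeas : ∀ i (h : H i), Measurable fun ω => A ω i h)
    (hTmeas : ∀ k, Measurable fun ω => T ω k)
    (hR : ∀ ω i, 0 < R ω i) (hGp : ∀ ω i, 0 ≤ Gp ω i)
    (hGcap : ∀ ω i (h : H i), 0 ≤ Gcap ω i h)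
    (ha : ∀ ω i (h : H i), 0 < a ω i h) (hA : ∀ ω i (h : H i), 0 < A ω i h)
    (hT : ∀ ω k, 0 < T ω k)
    (τhat τlow : ℝ) (hτhat : 0 < τhat) (hτlow : τlow < 0)
    (hInt : ∀ τ ∈ Tset τhat τlow,
      Integrable (fun ω =>
        Vval P0 Q0 α Cg (a ω) (A ω) (Gcap ω) (R ω) (Gp ω) (T ω) PTDF τ) P) :
    ConvexOn ℝ (Tset τhat τlow)
      (fun τ =>
        ∫ ω, Vval P0 Q0 α Cg (a ω) (A ω) (Gcap ω) (R ω) (Gp ω) (T ω) PTDF τ ∂P) ∧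
    ∀ τ ∈ Tset τhat τlow,
      (∫ ω, Vval P0 Q0 α Cg (a ω) (A ω) (Gcap ω) (R ω) (Gp ω) (T ω) PTDF τ ∂P) ≤
      (∫ ω, Vval P0 Q0 α Cg (a ω) (A ω) (Gcap ω) (R ω) (Gp ω) (T ω) PTDF
          ((0 : ℝ), (0 : ℝ)) ∂P) :=
  zero_volumetric_charge_optimal_stochastic_general hP0 hQ0 hα0 hα1
    (fun i _ => isCompact_Icc.bddBelow_image (hCg i).continuous.continuousOn)
    (.of_forall fun ω => nonempty_feasX PTDF (fun i => (hR ω i).le) (hGp ω) (hGcap ω)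
      fun k => (hT ω k).le)
    (convex_Tset τhat τlow) (Tset_subset_rateCone τhat τlow)
    ⟨le_rfl, hτhat.le, hτlow.le, le_rfl⟩ hInt
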